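/- The power series A(u) = Σ_{p≥0} a_p·u^p has radius of convergence exactly u_c, admits no analytic continuation to any neighborhood of the point u_c (i.e. u_c is its dominant singularity), and admits an analytic continuation to a slit disk at u_c. -/

import Mathlib

noncomputable def nuc : ℝ := 1 + 2 * Real.sqrt 7

noncomputable def tc : ℝ := Real.sqrt 10 / (8 * (7 + Real.sqrt 7) ^ ((3:ℝ)/2))

noncomputable def uc : ℝ := (6/5) * (7 + Real.sqrt 7) * tc

/-- The rational parametrization `û` of the `u`-variable. -/
noncomputable def uhat (H : ℂ) : ℂ :=
  ((uc : ℂ) / 3) * H * (10 - 12 * H + 6 * H ^ 2 - H ^ 3)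

/-- The rational parametrization `Ẑ₀`. -/
noncomputable def Z0hat (H : ℂ) : ℂ :=
  (1/10) * (1 - (1 - (Real.sqrt 7 : ℂ)) * H + 3 * H ^ 2 - H ^ 3)
    * (10 - 12 * H + 6 * H ^ 2 - H ^ 3)

/-- The rational parametrization `Ẑ₁`. -/
noncomputable def Z1hat (H : ℂ) : ℂ :=
  (3 / (10 * (uc : ℂ))) *
    ((Real.sqrt 7 : ℂ) - 1 + H - 3 * (4 - 3 * H + H ^ 2) / (10 - 12 * H + 6 * H ^ 2 - H ^ 3))

/-- The rational parametrization `Â`. -/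
noncomputable def Ahat (H : ℂ) : ℂ :=
  (1/10) * ((((3:ℝ)/2) ^ ((7:ℝ)/3) : ℝ) : ℂ) * (9 - 8 * H + 3 * H ^ 2) / (3 - 3 * H + H ^ 2) ^ 2

/-- The slit disk at `x > 0` of margin `ε > 0`. -/
def slitDisk (x ε : ℝ) : Set ℂ :=
  Metric.ball (0 : ℂ) (x + ε) \ (Complex.ofReal '' Set.Icc x (x + ε))

open Filter Topology

/-- A holomorphic function whose derivative has positive real part on a convex set is injective
there. -/
theorem Complex.injOn_of_re_deriv_pos {f f' : ℂ → ℂ} {s : Set ℂ} (hs : Convex ℝ s)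
    (hf : ∀ x ∈ s, HasDerivAt f (f' x) x) (hpos : ∀ x ∈ s, 0 < (f' x).re) : Set.InjOn f s := by
  intro x hx y hy hxy
  by_contra hne
  have hsub : y - x ≠ 0 := sub_ne_zero.2 (Ne.symm hne)
  have hseg : ∀ t ∈ Set.Icc (0 : ℝ) 1, x + t * (y - x) ∈ s := fun t ht => by
    simpa using hs.add_smul_sub_mem hx hy ht
  let φ : ℝ → ℝ := fun t => (starRingEnd ℂ (y - x) * f (x + t * (y - x))).re
  have hφ : ∀ t ∈ Set.Icc (0 : ℝ) 1,
      HasDerivAt φ (Complex.normSq (y - x) * (f' (x + t * (y - x))).re) t := fun t ht => by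
    have hline : HasDerivAt (fun t : ℂ => x + t * (y - x)) (y - x) (t : ℂ) := by
      simpa using ((hasDerivAt_id (t : ℂ)).mul_const (y - x)).const_add x
    have hcomp := ((hf _ (hseg t ht)).comp (t : ℂ) hline).const_mul (starRingEnd ℂ (y - x))
    have hval : Complex.normSq (y - x) * (f' (x + t * (y - x))).re =
        (starRingEnd ℂ (y - x) * (f' (x + t * (y - x)) * (y - x))).re := by
      simp only [Complex.normSq_apply, Complex.mul_re, Complex.mul_im, Complex.conj_re,
        Complex.conj_im]
      ring
    rw [hval]
    exact hcomp.real_of_complex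
  have hmono : StrictMonoOn φ (Set.Icc 0 1) := by
    refine strictMonoOn_of_deriv_pos (convex_Icc 0 1)
      (fun t ht => (hφ t ht).continuousAt.continuousWithinAt) fun t ht => ?_
    have ht' := interior_subset ht
    rw [(hφ t ht').deriv]
    exact mul_pos (Complex.normSq_pos.2 hsub) (hpos _ (hseg t ht'))
  have hlt := hmono (by simp) (by simp) (zero_lt_one (α := ℝ))
  simp [φ, hxy] at hlt

/-- The inverse of an injective holomorphic function with nonvanishing derivative is
holomorphic. -/
theorem Set.InjOn.differentiableAt_invFunOn {f : ℂ → ℂ} {f' c : ℂ} {s : Set ℂ}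
    (hinj : Set.InjOn f s) (hs : IsOpen s) (hc : c ∈ s) (hf : HasStrictDerivAt f f' c)
    (hf' : f' ≠ 0) : DifferentiableAt ℂ (Function.invFunOn f s) (f c) := by
  refine (hf.to_localInverse hf').hasDerivAt.differentiableAt.congr_of_eventuallyEq ?_
  have htend : Tendsto (hf.localInverse f f' c hf') (𝓝 (f c)) (𝓝 c) :=
    (hf.hasStrictFDerivAt_equiv hf').localInverse_tendsto
  filter_upwards [htend.eventually (hs.mem_nhds hc), hf.eventually_right_inverse hf']
    with z hz hfz
  have hex : ∃ a ∈ s, f a = z := ⟨_, hz, hfz⟩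
  exact hinj (Function.invFunOn_mem hex) hz ((Function.invFunOn_eq hex).trans hfz.symm)

/-- With `H = 3 - 3 c ^ 3`, the cube of this quartic is `1 - û(H) / u_c`. -/
noncomputable def quartic (c : ℂ) : ℂ := 3 * c ^ 4 - 2 * c

/-- A truncated sector on which `quartic` is injective and whose image contains the right
half-plane. -/
def truncSector : Set ℂ := {c | 87 / 100 < c.re ∧ |c.im| < 9 / 20 * c.re}

theorem quartic_re (c : ℂ) :
    (quartic c).re = 3 * (c.re ^ 4 - 6 * c.re ^ 2 * c.im ^ 2 + c.im ^ 4) - 2 * c.re := by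
  simp only [quartic, pow_succ, pow_zero, one_mul, Complex.sub_re, Complex.mul_re, Complex.mul_im,
    Complex.re_ofNat, Complex.im_ofNat]
  ring

theorem hasStrictDerivAt_quartic (c : ℂ) : HasStrictDerivAt quartic (12 * c ^ 3 - 2) c := by
  have h := ((hasStrictDerivAt_pow 4 c).const_mul (3 : ℂ)).sub
    ((hasStrictDerivAt_id c).const_mul (2 : ℂ))
  exact h.congr_deriv (by push_cast; ring)

theorem continuous_quartic : Continuous quartic := by unfold quartic; fun_prop

theorem isOpen_truncSector : IsOpen truncSector :=
  (isOpen_lt continuous_const Complex.continuous_re).inter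
    (isOpen_lt Complex.continuous_im.abs (continuous_const.mul Complex.continuous_re))

theorem convex_truncSector : Convex ℝ truncSector := by
  intro x hx y hy a b ha hb hab
  obtain ⟨hx1, hx2⟩ := hx
  obtain ⟨hy1, hy2⟩ := hy
  rw [abs_lt] at hx2 hy2
  have hb' : b = 1 - a := by linarith
  subst hb'
  simp only [truncSector, Set.mem_ofPred_eq, Complex.add_re, Complex.add_im, Complex.real_smul,
    Complex.mul_re, Complex.mul_im, Complex.ofReal_re, Complex.ofReal_im, zero_mul, sub_zero,
    add_zero, abs_lt]
  have key : ∀ p q : ℝ, 0 < p → 0 < q → 0 < a * p + (1 - a) * q := fun p q hp hq => by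
    rcases ha.eq_or_lt with rfl | ha'
    · simpa using hq
    · have := mul_pos ha' hp
      have := mul_nonneg hb hq.le
      linarith
  have h1 := key _ _ (sub_pos.2 hx1) (sub_pos.2 hy1)
  have h2 := key _ _ (sub_pos.2 hx2.1) (sub_pos.2 hy2.1)
  have h3 := key _ _ (sub_pos.2 hx2.2) (sub_pos.2 hy2.2)
  refine ⟨?_, ?_, ?_⟩ <;> linarith

theorem im_sq_lt_of_mem_truncSector {c : ℂ} (hc : c ∈ truncSector) :
    c.im ^ 2 < 81 / 400 * c.re ^ 2 := by
  have h := sq_lt_sq' (abs_lt.1 hc.2).1 (abs_lt.1 hc.2).2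
  linarith [mul_pow (9 / 20 : ℝ) c.re 2]

theorem re_deriv_quartic_pos {c : ℂ} (hc : c ∈ truncSector) : 0 < (12 * c ^ 3 - 2).re := by
  have hre : (12 * c ^ 3 - 2).re = 12 * (c.re ^ 3 - 3 * c.re * c.im ^ 2) - 2 := by
    simp only [pow_succ, pow_zero, one_mul, Complex.sub_re, Complex.mul_re, Complex.mul_im,
      Complex.re_ofNat, Complex.im_ofNat]
    ring
  have hx := hc.1
  have hx0 : 0 < c.re := by linarith
  have h1 := mul_lt_mul_of_pos_left (im_sq_lt_of_mem_truncSector hc) hx0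
  have h2 : (87 / 100 : ℝ) ^ 3 < c.re ^ 3 := pow_lt_pow_left₀ hx (by norm_num) (by norm_num)
  rw [hre]
  nlinarith

theorem deriv_quartic_ne_zero {c : ℂ} (hc : c ∈ truncSector) : 12 * c ^ 3 - 2 ≠ 0 := fun h => by
  simpa [h] using re_deriv_quartic_pos hc

theorem injOn_quartic : Set.InjOn quartic truncSector :=
  Complex.injOn_of_re_deriv_pos convex_truncSector
    (fun c _ => (hasStrictDerivAt_quartic c).hasDerivAt) fun _ => re_deriv_quartic_pos

theorem isOpen_quartic_image : IsOpen (quartic '' truncSector) := by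
  rw [isOpen_iff_mem_nhds]
  rintro _ ⟨c, hc, rfl⟩
  rw [← (hasStrictDerivAt_quartic c).map_nhds_eq (deriv_quartic_ne_zero hc)]
  exact image_mem_map (isOpen_truncSector.mem_nhds hc)

theorem isClosedMap_quartic : IsClosedMap quartic := by
  refine IsProperMap.isClosedMap (isProperMap_iff_tendsto_cocompact.2 ⟨continuous_quartic, ?_⟩)
  rw [← Metric.cobounded_eq_cocompact, ← comap_norm_atTop (E := ℂ), tendsto_comap_iff]
  have hlow : ∀ c : ℂ, ‖c‖ - 3 ≤ ‖quartic c‖ := fun c => by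
    have h := norm_sub_norm_le (3 * c ^ 4) (2 * c)
    simp only [norm_mul, norm_pow, Complex.norm_ofNat] at h
    unfold quartic
    nlinarith [sq_nonneg (‖c‖ ^ 2 - 1), sq_nonneg (‖c‖ - 1)]
  exact tendsto_atTop_mono hlow (tendsto_atTop_add_const_right _ (-3) tendsto_comap)

theorem mem_truncSector_of_mem_closure {c : ℂ} (hc : c ∈ closure truncSector)
    (hpos : 0 < (quartic c).re) : c ∈ truncSector := by
  have hclosed : IsClosed {c : ℂ | 87 / 100 ≤ c.re ∧ |c.im| ≤ 9 / 20 * c.re} :=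
    (isClosed_le continuous_const Complex.continuous_re).inter
      (isClosed_le Complex.continuous_im.abs (continuous_const.mul Complex.continuous_re))
  have hsub : truncSector ⊆ {c : ℂ | 87 / 100 ≤ c.re ∧ |c.im| ≤ 9 / 20 * c.re} :=
    fun c hc => And.intro hc.1.le hc.2.le
  obtain ⟨hx, hy⟩ := closure_minimal hsub hclosed hc
  rw [quartic_re] at hpos
  have hx0 : 0 < c.re := by linarith
  have hy2 : c.im ^ 2 ≤ 81 / 400 * c.re ^ 2 := by
    have h := sq_le_sq' (abs_le.1 hy).1 (abs_le.1 hy).2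
    linarith [mul_pow (9 / 20 : ℝ) c.re 2]
  refine ⟨hx.lt_of_ne fun h => ?_, hy.lt_of_ne fun h => ?_⟩
  · rw [← h] at hpos hy2
    nlinarith [sq_nonneg c.im]
  · have h2 : c.im ^ 2 = 81 / 400 * c.re ^ 2 := by rw [← sq_abs, h]; ring
    have h4 : c.im ^ 4 = (81 / 400 * c.re ^ 2) ^ 2 := by rw [← h2]; ring
    rw [h2, h4] at hpos
    nlinarith [pow_pos hx0 4]

theorem exists_quartic_eq {z : ℂ} (hz : 0 < z.re) : ∃ c ∈ truncSector, quartic c = z := by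
  refine (convex_halfSpace_re_gt 0).isPreconnected.subset_of_closure_inter_subset
    isOpen_quartic_image ⟨1, by simp, 1, ⟨by norm_num, by norm_num⟩, by norm_num [quartic]⟩ ?_ hz
  rintro w ⟨hw, hw0⟩
  obtain ⟨c, hc, rfl⟩ := (isClosedMap_quartic _ isClosed_closure).closure_subset_iff.2
    (Set.image_mono subset_closure) hw
  exact ⟨c, mem_truncSector_of_mem_closure hc hw0, rfl⟩

/-- The inverse of `quartic` on the right half-plane. -/
noncomputable def quarticInv : ℂ → ℂ := Function.invFunOn quartic truncSector

theorem quarticInv_mem {z : ℂ} (hz : 0 < z.re) : quarticInv z ∈ truncSector :=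
  Function.invFunOn_mem (exists_quartic_eq hz)

theorem quartic_quarticInv {z : ℂ} (hz : 0 < z.re) : quartic (quarticInv z) = z :=
  Function.invFunOn_eq (exists_quartic_eq hz)

theorem quarticInv_quartic {c : ℂ} (hc : c ∈ truncSector) : quarticInv (quartic c) = c :=
  injOn_quartic.leftInvOn_invFunOn hc

theorem differentiableAt_quarticInv {z : ℂ} (hz : 0 < z.re) :
    DifferentiableAt ℂ quarticInv z := by
  have h := injOn_quartic.differentiableAt_invFunOn isOpen_truncSector (quarticInv_mem hz)
    (hasStrictDerivAt_quartic _) (deriv_quartic_ne_zero (quarticInv_mem hz))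
  rwa [quartic_quarticInv hz] at h

theorem uc_pos : 0 < uc := by unfold uc tc; positivity

theorem uhat_three_sub (c : ℂ) : uhat (3 - 3 * c ^ 3) = uc * (1 - quartic c ^ 3) := by
  unfold uhat quartic
  ring

theorem Ahat_denominator_ne_zero {c : ℂ} (hc : c ∈ truncSector) :
    3 - 3 * (3 - 3 * c ^ 3) + (3 - 3 * c ^ 3) ^ 2 ≠ 0 := by
  intro h
  have hnorm : (87 / 100 : ℝ) ^ 6 < Complex.normSq (c ^ 3) := by
    have h1 : (87 / 100 : ℝ) ^ 2 < Complex.normSq c := by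
      rw [Complex.normSq_apply]
      nlinarith [hc.1, mul_self_nonneg c.im]
    have h2 := pow_lt_pow_left₀ h1 (by norm_num) (three_ne_zero)
    rw [map_pow]
    linarith
  generalize c ^ 3 = q at h hnorm
  rw [Complex.normSq_apply] at hnorm
  have hq : 3 * q ^ 2 - 3 * q + 1 = 0 := by linear_combination h / 3
  have hre := congrArg Complex.re hq
  have him := congrArg Complex.im hq
  simp only [pow_two, Complex.add_re, Complex.sub_re, Complex.mul_re, Complex.add_im,
    Complex.sub_im, Complex.mul_im, Complex.re_ofNat, Complex.im_ofNat, Complex.one_re,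
    Complex.one_im, Complex.zero_re, Complex.zero_im] at hre him
  have hfac : q.im * (2 * q.re - 1) = 0 := by linarith
  rcases mul_eq_zero.1 hfac with h0 | h0
  · rw [h0] at hre
    nlinarith [sq_nonneg (2 * q.re - 1)]
  · have : q.re = 1 / 2 := by linarith
    rw [this] at hre hnorm
    nlinarith

theorem differentiableAt_Ahat {H : ℂ} (hH : 3 - 3 * H + H ^ 2 ≠ 0) :
    DifferentiableAt ℂ Ahat H := by
  unfold Ahat
  exact DifferentiableAt.div (by fun_prop) (by fun_prop) (pow_ne_zero 2 hH)

theorem analyticAt_Ahat_one : AnalyticAt ℂ Ahat 1 := by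
  unfold Ahat
  exact AnalyticAt.div (by fun_prop) (by fun_prop) (by norm_num)

theorem deriv_Ahat_one_ne_zero : deriv Ahat 1 ≠ 0 := by
  have hK : ((((3 : ℝ) / 2) ^ ((7 : ℝ) / 3) : ℝ) : ℂ) ≠ 0 := by
    exact_mod_cast (Real.rpow_pos_of_pos (by norm_num) _).ne'
  generalize hKdef : ((((3 : ℝ) / 2) ^ ((7 : ℝ) / 3) : ℝ) : ℂ) = K at hK
  have hnum : HasDerivAt (fun H : ℂ => 1 / 10 * K * (9 - 8 * H + 3 * H ^ 2))
      (1 / 10 * K * (-8 + 3 * (2 * 1))) 1 := by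
    have := ((((hasDerivAt_id (1 : ℂ)).const_mul 8).const_sub 9).add
      ((hasDerivAt_pow 2 (1 : ℂ)).const_mul 3)).const_mul (1 / 10 * K)
    simpa using this
  have hden : HasDerivAt (fun H : ℂ => (3 - 3 * H + H ^ 2) ^ 2) (-2) 1 := by
    have := ((((hasDerivAt_id (1 : ℂ)).const_mul 3).const_sub 3).add
      (hasDerivAt_pow 2 (1 : ℂ))).pow 2
    exact this.congr_deriv (by norm_num)
  have h := hnum.div hden (by norm_num)
  have hA : Ahat = (fun H : ℂ => 1 / 10 * K * (9 - 8 * H + 3 * H ^ 2)) /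
      fun H : ℂ => (3 - 3 * H + H ^ 2) ^ 2 := by
    funext H
    simp only [Ahat, hKdef, Pi.div_apply]
  rw [hA, h.deriv]
  norm_num
  intro h0
  apply hK
  linear_combination (5 / 3) * h0

theorem Complex.cpow_third_re_pos {w : ℂ} (hw : w ≠ 0) : 0 < (w ^ (3⁻¹ : ℂ)).re := by
  rw [Complex.cpow_def_of_ne_zero hw, Complex.exp_re]
  refine mul_pos (Real.exp_pos _) (Real.cos_pos_of_mem_Ioo ?_)
  have him : (Complex.log w * 3⁻¹).im = w.arg / 3 := by
    rw [← div_eq_mul_inv, Complex.div_ofNat_im, Complex.log_im]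
  rw [him]
  have := Complex.neg_pi_lt_arg w
  have := Complex.arg_le_pi w
  constructor <;> linarith [Real.pi_pos]

/-- The continuation of the local inverse of `û` at `0`. -/
noncomputable def uhatInv (u : ℂ) : ℂ := 3 - 3 * quarticInv ((1 - u / uc) ^ (3⁻¹ : ℂ)) ^ 3

theorem one_sub_div_uc_ne_zero {u : ℂ} (hu : u ≠ uc) : 1 - u / uc ≠ 0 := by
  have huc : (uc : ℂ) ≠ 0 := by exact_mod_cast uc_pos.ne'
  rw [sub_ne_zero, ne_comm, Ne, div_eq_one_iff_eq huc]
  exact hu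

theorem uhat_uhatInv {u : ℂ} (hu : u ≠ uc) : uhat (uhatInv u) = u := by
  have huc : (uc : ℂ) ≠ 0 := by exact_mod_cast uc_pos.ne'
  rw [uhatInv, uhat_three_sub,
    quartic_quarticInv (Complex.cpow_third_re_pos (one_sub_div_uc_ne_zero hu)),
    Complex.cpow_ofNat_inv_pow]
  field_simp
  ring

theorem uhatInv_three_sub {c : ℝ} (hc : (c : ℂ) ∈ truncSector) (hpos : 0 < 3 * c ^ 4 - 2 * c) :
    uhatInv (uhat (3 - 3 * c ^ 3)) = 3 - 3 * c ^ 3 := by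
  have huc : (uc : ℂ) ≠ 0 := by exact_mod_cast uc_pos.ne'
  have hw : 1 - uhat (3 - 3 * c ^ 3) / uc = quartic c ^ 3 := by
    rw [uhat_three_sub]
    field_simp
    ring
  have hq : quartic c = ((3 * c ^ 4 - 2 * c : ℝ) : ℂ) := by simp [quartic]
  have hroot : (quartic c ^ 3) ^ (3⁻¹ : ℂ) = quartic c := by
    have harg : (quartic c).arg = 0 := by rw [hq, Complex.arg_ofReal_of_nonneg hpos.le]
    refine Complex.pow_cpow_ofNat_inv ?_ ?_ <;> rw [harg] <;> linarith [Real.pi_pos]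
  rw [uhatInv, hw, hroot, quarticInv_quartic hc]

theorem uhatInv_uhat_ofReal {H : ℝ} (h0 : 0 < H) (h1 : H < 1) : uhatInv (uhat H) = H := by
  obtain ⟨c, hc0, hc⟩ : ∃ c : ℝ, 0 ≤ c ∧ c ^ 3 = (3 - H) / 3 :=
    ⟨((3 - H) / 3) ^ ((3 : ℕ) : ℝ)⁻¹, Real.rpow_nonneg (by linarith) _,
      Real.rpow_inv_natCast_pow (by linarith) three_ne_zero⟩
  have hc1 : 87 / 100 < c := by
    refine lt_of_pow_lt_pow_left₀ 3 hc0 ?_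
    rw [hc]
    linarith
  have hH : (H : ℂ) = 3 - 3 * (c : ℂ) ^ 3 := by
    have : H = 3 - 3 * c ^ 3 := by linarith
    exact_mod_cast this
  rw [hH]
  refine uhatInv_three_sub ⟨by simpa using hc1, ?_⟩ ?_
  · simp only [Complex.ofReal_im, Complex.ofReal_re, abs_zero]
    linarith
  · have : 0 < c * (3 * c ^ 3 - 2) := mul_pos (by linarith) (by linarith)
    linarith

theorem one_sub_div_uc_mem_slitPlane {u : ℂ} (hu : ∀ x : ℝ, uc ≤ x → u ≠ x) :
    1 - u / uc ∈ Complex.slitPlane := by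
  rw [Complex.mem_slitPlane_iff_not_le_zero, Complex.le_def]
  rintro ⟨hre, him⟩
  simp only [Complex.sub_re, Complex.one_re, Complex.div_ofReal_re, Complex.zero_re,
    Complex.sub_im, Complex.one_im, Complex.div_ofReal_im, Complex.zero_im] at hre him
  refine hu u.re ?_ (Complex.ext rfl ?_)
  · have := (one_le_div uc_pos).1 (by linarith : 1 ≤ u.re / uc)
    exact this
  · have h : u.im / uc = 0 := by linarith
    simpa [uc_pos.ne'] using h

theorem differentiableAt_uhatInv {u : ℂ} (hu : ∀ x : ℝ, uc ≤ x → u ≠ x) :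
    DifferentiableAt ℂ uhatInv u := by
  have hroot : DifferentiableAt ℂ (fun u : ℂ => (1 - u / uc) ^ (3⁻¹ : ℂ)) u :=
    DifferentiableAt.cpow (by fun_prop) (by fun_prop) (one_sub_div_uc_mem_slitPlane hu)
  have hinv := differentiableAt_quarticInv
    (Complex.cpow_third_re_pos (one_sub_div_uc_ne_zero (hu uc le_rfl)))
  exact ((hinv.comp u hroot).pow 3).const_mul 3 |>.const_sub 3

theorem differentiableAt_Ahat_uhatInv {u : ℂ} (hu : ∀ x : ℝ, uc ≤ x → u ≠ x) :
    DifferentiableAt ℂ (Ahat ∘ uhatInv) u := by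
  refine DifferentiableAt.comp u (differentiableAt_Ahat ?_) (differentiableAt_uhatInv hu)
  exact Ahat_denominator_ne_zero
    (quarticInv_mem (Complex.cpow_third_re_pos (one_sub_div_uc_ne_zero (hu uc le_rfl))))

theorem ne_ofReal_of_norm_lt {u : ℂ} (hu : ‖u‖ < uc) (x : ℝ) (hx : uc ≤ x) : u ≠ x := by
  rintro rfl
  rw [Complex.norm_real, Real.norm_eq_abs] at hu
  linarith [le_abs_self x]

theorem uhatInv_zero : uhatInv 0 = 0 := by
  have h : quarticInv 1 = 1 := by
    have h1 : (1 : ℂ) ∈ truncSector := ⟨by norm_num, by norm_num⟩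
    have h2 : quartic 1 = 1 := by norm_num [quartic]
    simpa [h2] using quarticInv_quartic h1
  simp [uhatInv, h]

theorem hasDerivAt_uhat_one : HasDerivAt uhat 0 1 := by
  have hpoly : HasDerivAt (fun H : ℂ => 10 - 12 * H + 6 * H ^ 2 - H ^ 3) (-3) 1 := by
    have := ((((hasDerivAt_id (1 : ℂ)).const_mul 12).const_sub 10).add
      ((hasDerivAt_pow 2 (1 : ℂ)).const_mul 6)).sub (hasDerivAt_pow 3 (1 : ℂ))
    exact this.congr_deriv (by norm_num)
  exact (((hasDerivAt_id (1 : ℂ)).const_mul ((uc : ℂ) / 3)).mul hpoly).congr_deriv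
    (by norm_num)

theorem uhat_one : uhat 1 = uc := by
  unfold uhat
  ring

theorem continuous_uhat : Continuous uhat := by unfold uhat; fun_prop

/-- A power series that agrees near `0` with a function holomorphic on a disk converges to it on
the whole disk. -/
theorem hasSum_of_eventually_hasSum {f : ℂ → ℂ} {r : ℝ} (hr : 0 < r)
    (hf : DifferentiableOn ℂ f (Metric.ball 0 r)) {a : ℕ → ℂ}
    (ha : ∀ᶠ u in 𝓝 (0 : ℂ), HasSum (fun p => a p * u ^ p) (f u)) {u : ℂ} (hu : ‖u‖ < r) :
    HasSum (fun p => a p * u ^ p) (f u) := by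
  have htaylor : ∀ v ∈ Metric.ball (0 : ℂ) r,
      HasSum (fun p => (p.factorial : ℂ)⁻¹ * iteratedDeriv p f 0 * v ^ p) (f v) := fun v hv => by
    have h := Complex.hasSum_taylorSeries_on_ball hf hv
    simp only [sub_zero, smul_eq_mul] at h
    simpa only [mul_assoc, mul_comm, mul_left_comm] using h
  have h1 : HasFPowerSeriesAt f (FormalMultilinearSeries.ofScalars ℂ a) 0 := by
    rw [hasFPowerSeriesAt_iff]
    filter_upwards [ha] with v hv
    simpa [FormalMultilinearSeries.coeff_ofScalars, mul_comm] using hv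
  have h2 : HasFPowerSeriesAt f (FormalMultilinearSeries.ofScalars ℂ
      fun p => (p.factorial : ℂ)⁻¹ * iteratedDeriv p f 0) 0 := by
    rw [hasFPowerSeriesAt_iff]
    filter_upwards [Metric.ball_mem_nhds (0 : ℂ) hr] with v hv
    have := htaylor v hv
    simp only [FormalMultilinearSeries.coeff_ofScalars, zero_add, smul_eq_mul]
    simpa only [mul_assoc, mul_comm, mul_left_comm] using this
  have heq := h1.eq_formalMultilinearSeries h2
  have hcoeff : ∀ p, a p = (p.factorial : ℂ)⁻¹ * iteratedDeriv p f 0 := fun p => by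
    have := congrArg (fun q => FormalMultilinearSeries.coeff q p) heq
    simpa only [FormalMultilinearSeries.coeff_ofScalars] using this
  simp only [hcoeff]
  exact htaylor u (by simpa using hu)

/-- A power series is analytic strictly inside any disk on whose boundary it converges at some
point. -/
theorem analyticAt_tsum_of_summable {a : ℕ → ℂ} {u₀ w : ℂ}
    (hs : Summable fun p => a p * u₀ ^ p) (hw : ‖w‖ < ‖u₀‖) :
    AnalyticAt ℂ (fun u => ∑' p, a p * u ^ p) w := by
  let P := FormalMultilinearSeries.ofScalars ℂ a
  have hrad : ((‖u₀‖₊ : NNReal) : ENNReal) ≤ P.radius := by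
    refine P.le_radius_of_tendsto (l := 0) ?_
    have h := hs.tendsto_atTop_zero.norm
    simpa [P, FormalMultilinearSeries.ofScalars_norm, norm_mul, norm_pow] using h
  have hw' : ((‖w‖₊ : NNReal) : ENNReal) < P.radius :=
    lt_of_lt_of_le (by exact_mod_cast hw) hrad
  have hP := P.hasFPowerSeriesOnBall (lt_of_le_of_lt bot_le hw')
  have hsum : P.sum = fun u => ∑' p, a p * u ^ p := by
    funext u
    simp [P, FormalMultilinearSeries.sum, mul_comm]
  rw [← hsum]
  refine hP.analyticAt_of_mem ?_
  simpa [Metric.mem_eball, edist_zero_right, enorm_eq_nnnorm] using hw'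

section Continuation

variable {ρ : ℝ} {a : ℕ → ℝ}

theorem hasSum_Ahat_uhatInv (hρ : 0 < ρ)
    (hA : ∀ H : ℂ, ‖H‖ < ρ → HasSum (fun p : ℕ => (a p : ℂ) * uhat H ^ p) (Ahat H))
    {u : ℂ} (hu : ‖u‖ < uc) : HasSum (fun p : ℕ => (a p : ℂ) * u ^ p) (Ahat (uhatInv u)) := by
  refine hasSum_of_eventually_hasSum (f := Ahat ∘ uhatInv) (a := fun p => (a p : ℂ)) uc_pos
    (fun v hv => (differentiableAt_Ahat_uhatInv
      (ne_ofReal_of_norm_lt (by simpa using hv))).differentiableWithinAt) ?_ hu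
  have hcont : Tendsto uhatInv (𝓝 0) (𝓝 0) := by
    have := (differentiableAt_uhatInv
      (ne_ofReal_of_norm_lt (u := 0) (by simpa using uc_pos))).continuousAt.tendsto
    rwa [uhatInv_zero] at this
  filter_upwards [hcont.eventually (Metric.ball_mem_nhds 0 hρ), Metric.ball_mem_nhds 0 uc_pos]
    with v hv hvuc
  have h := hA (uhatInv v) (by simpa using hv)
  rwa [uhat_uhatInv (ne_ofReal_of_norm_lt (by simpa using hvuc) uc le_rfl)] at h

theorem norm_uhat_ofReal_lt {H : ℝ} (h0 : 0 < H) (h1 : H < 1) : ‖uhat H‖ < uc := by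
  have hreal : uhat H = ((uc * (H * (10 - 12 * H + 6 * H ^ 2 - H ^ 3) / 3) : ℝ) : ℂ) := by
    unfold uhat
    push_cast
    ring
  have hpos : 0 < H * (10 - 12 * H + 6 * H ^ 2 - H ^ 3) := by
    have hlt : H ^ 3 < 1 := pow_lt_one₀ h0.le h1 three_ne_zero
    exact mul_pos h0 (by nlinarith [sq_nonneg (1 - H)])
  have hlt : H * (10 - 12 * H + 6 * H ^ 2 - H ^ 3) / 3 < 1 := by
    have : 0 < (1 - H) ^ 3 * (3 - H) := mul_pos (pow_pos (by linarith) 3) (by linarith)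
    linarith
  rw [hreal, Complex.norm_real, Real.norm_of_nonneg (by have := uc_pos; positivity)]
  exact mul_lt_of_lt_one_right uc_pos hlt

theorem not_exists_analytic_extension (hρ : 0 < ρ)
    (hA : ∀ H : ℂ, ‖H‖ < ρ → HasSum (fun p : ℕ => (a p : ℂ) * uhat H ^ p) (Ahat H)) :
    ¬ ∃ (g : ℂ → ℂ) (ε : ℝ), 0 < ε ∧
        (∀ w ∈ Metric.ball ((uc : ℝ) : ℂ) ε, AnalyticAt ℂ g w) ∧
        ∀ u : ℂ, ‖u‖ < uc → u ∈ Metric.ball ((uc : ℝ) : ℂ) ε →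
          g u = ∑' p : ℕ, (a p : ℂ) * u ^ p := by
  rintro ⟨g, ε, hε, hg, hgsum⟩
  have hgan : AnalyticAt ℂ g (uhat 1) := by
    rw [uhat_one]
    exact hg _ (Metric.mem_ball_self hε)
  have huan : AnalyticAt ℂ uhat 1 := by unfold uhat; fun_prop
  have hball : ∀ᶠ H in 𝓝 (1 : ℂ), uhat H ∈ Metric.ball ((uc : ℝ) : ℂ) ε := by
    refine continuous_uhat.continuousAt.eventually ?_
    rw [uhat_one]
    exact Metric.ball_mem_nhds _ hε
  have htend : Tendsto (fun H : ℝ => (H : ℂ)) (𝓝[<] 1) (𝓝[≠] 1) := by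
    refine tendsto_nhdsWithin_iff.2 ⟨?_, ?_⟩
    · exact (Complex.continuous_ofReal.tendsto' 1 1 (by simp)).mono_left nhdsWithin_le_nhds
    · filter_upwards [self_mem_nhdsWithin] with H hH
      have : H ≠ 1 := ne_of_lt hH
      simpa using this
  have hfreq : ∃ᶠ H in 𝓝[≠] (1 : ℂ), (g ∘ uhat) H = Ahat H := by
    refine htend.frequently (Eventually.frequently ?_)
    filter_upwards [htend.eventually (hball.filter_mono nhdsWithin_le_nhds),
      Ioo_mem_nhdsLT (zero_lt_one (α := ℝ))] with H hH hH01
    have hlt := norm_uhat_ofReal_lt hH01.1 hH01.2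
    rw [Function.comp_apply, hgsum _ hlt hH, (hasSum_Ahat_uhatInv hρ hA hlt).tsum_eq,
      uhatInv_uhat_ofReal hH01.1 hH01.2]
  have heq : g ∘ uhat =ᶠ[𝓝 1] Ahat :=
    ((hgan.comp huan).frequently_eq_iff_eventually_eq analyticAt_Ahat_one).1 hfreq
  have hderiv : deriv (g ∘ uhat) 1 = 0 := by
    simpa using (hgan.differentiableAt.hasDerivAt.comp 1 hasDerivAt_uhat_one).deriv
  exact deriv_Ahat_one_ne_zero (heq.deriv_eq.symm.trans hderiv)

end Continuation

/-- the power series `A(u) = Σ_p a_p u^p` has radius of convergence exactly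
`u_c`, admits no analytic continuation to any neighborhood of `u_c`, and admits an
analytic continuation to a slit disk at `u_c`. -/
theorem statement6
    (ρ : ℝ) (hρ : 0 < ρ)
    (a : ℕ → ℝ)
    -- `a p` are the Taylor coefficients of `A = Â ∘ û⁻¹` at `0`
    (hA : ∀ H : ℂ, ‖H‖ < ρ →
      HasSum (fun p : ℕ => (a p : ℂ) * uhat H ^ p) (Ahat H)) :
    (∀ u : ℂ, ‖u‖ < uc → Summable (fun p : ℕ => (a p : ℂ) * u ^ p)) ∧
    (∀ u : ℂ, uc < ‖u‖ → ¬ Summable (fun p : ℕ => (a p : ℂ) * u ^ p)) ∧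
    (¬ ∃ (g : ℂ → ℂ) (ε : ℝ), 0 < ε ∧
        (∀ w ∈ Metric.ball ((uc : ℝ) : ℂ) ε, AnalyticAt ℂ g w) ∧
        ∀ u : ℂ, ‖u‖ < uc → u ∈ Metric.ball ((uc : ℝ) : ℂ) ε →
          g u = ∑' p : ℕ, (a p : ℂ) * u ^ p) ∧
    (∃ (g : ℂ → ℂ) (ε : ℝ), 0 < ε ∧
        (∀ w ∈ slitDisk uc ε, AnalyticAt ℂ g w) ∧
        ∀ u : ℂ, ‖u‖ < uc → g u = ∑' p : ℕ, (a p : ℂ) * u ^ p) := by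
  refine ⟨fun u hu => (hasSum_Ahat_uhatInv hρ hA hu).summable, fun u hu hs => ?_,
    not_exists_analytic_extension hρ hA, Ahat ∘ uhatInv, 1, one_pos, fun w hw => ?_,
    fun u hu => (hasSum_Ahat_uhatInv hρ hA hu).tsum_eq.symm⟩
  · refine not_exists_analytic_extension hρ hA
      ⟨_, ‖u‖ - uc, sub_pos.2 hu, fun w hw => analyticAt_tsum_of_summable hs ?_, fun _ _ _ => rfl⟩
    have h1 : ‖w - uc‖ < ‖u‖ - uc := by simpa [dist_eq_norm] using hw
    have h2 := norm_sub_norm_le w uc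
    rw [Complex.norm_real, Real.norm_of_nonneg uc_pos.le] at h2
    linarith
  · have hslit : ∀ v ∈ slitDisk uc 1, ∀ x : ℝ, uc ≤ x → v ≠ x := by
      rintro _ ⟨hball, hnot⟩ x hx rfl
      rw [mem_ball_zero_iff, Complex.norm_real, Real.norm_eq_abs] at hball
      exact hnot ⟨x, ⟨hx, (le_abs_self x).trans hball.le⟩, rfl⟩
    have hopen : IsOpen (slitDisk uc 1) :=
      Metric.isOpen_ball.sdiff (isCompact_Icc.image Complex.continuous_ofReal).isClosed
    exact DifferentiableOn.analyticAt (s := slitDisk uc 1)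
      (fun v hv => (differentiableAt_Ahat_uhatInv (hslit v hv)).differentiableWithinAt)
      (hopen.mem_nhds hw)
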